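/- Let f be a non-wandering homeomorphism of the open annulus 𝔸 = 𝕋¹ × ℝ homotopic to the identity with no periodic points, and let C ⊆ 𝔸 be an f-invariant circloid. Then C has empty interior. -/

import Mathlib

open Filter Topology

local notation "⟪" x ", " y "⟫" => @inner ℝ _ _ x y

noncomputable section

/-- The open annulus `𝔸 = 𝕋¹ × ℝ`. -/
abbrev Ann := AddCircle (1 : ℝ) × ℝ

/-- `S ⊆ 𝔸` is unbounded from above in the `ℝ`-coordinate. -/
def UnbAbove (S : Set Ann) : Prop := ¬ BddAbove (Prod.snd '' S)

/-- `S ⊆ 𝔸` is unbounded from below in the `ℝ`-coordinate. -/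
def UnbBelow (S : Set Ann) : Prop := ¬ BddBelow (Prod.snd '' S)

/-- `S ⊆ 𝔸` is bounded (equivalently, bounded in the `ℝ`-coordinate). -/
def BoundedA (S : Set Ann) : Prop := BddAbove (Prod.snd '' S) ∧ BddBelow (Prod.snd '' S)

/-- `E ⊆ 𝔸` is essential: no connected component of its complement is unbounded both
above and below. -/
def EssentialA (E : Set Ann) : Prop :=
  ∀ x ∈ Eᶜ, ¬ (UnbAbove (connectedComponentIn Eᶜ x) ∧ UnbBelow (connectedComponentIn Eᶜ x))

/-- An annular continuum: a compact connected set whose complement has exactly two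
connected components, both unbounded. -/
def IsAnnularContinuum (E : Set Ann) : Prop :=
  IsCompact E ∧ IsConnected E ∧
  (∀ x ∈ Eᶜ, ¬ BoundedA (connectedComponentIn Eᶜ x)) ∧
  ∃ x y, x ∈ Eᶜ ∧ y ∈ Eᶜ ∧ connectedComponentIn Eᶜ x ≠ connectedComponentIn Eᶜ y ∧
    ∀ z ∈ Eᶜ, connectedComponentIn Eᶜ z = connectedComponentIn Eᶜ x ∨
      connectedComponentIn Eᶜ z = connectedComponentIn Eᶜ y

/-- A circloid: an annular continuum containing no strictly smaller annular continuum. -/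
def IsCircloidA (C : Set Ann) : Prop :=
  IsAnnularContinuum C ∧ ∀ E ⊆ C, IsAnnularContinuum E → E = C

/-- `ℒ(U)`: the connected component of `𝔸 \ cl(U)` unbounded from below (for a
generating set it is unique; in general we take the union of all components of
`𝔸 \ cl(U)` unbounded from below). -/
def lowerComp (U : Set Ann) : Set Ann :=
  {z | z ∈ (closure U)ᶜ ∧ UnbBelow (connectedComponentIn (closure U)ᶜ z)}

/-- `𝒰(L)`: the connected component of `𝔸 \ cl(L)` unbounded from above. -/
def upperComp (L : Set Ann) : Set Ann :=
  {z | z ∈ (closure L)ᶜ ∧ UnbAbove (connectedComponentIn (closure L)ᶜ z)}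

/-- An upper generating set: bounded from below with essential closure. -/
def UpperGen (U : Set Ann) : Prop := BddBelow (Prod.snd '' U) ∧ EssentialA (closure U)

/-- A lower generating set: bounded from above with essential closure. -/
def LowerGen (L : Set Ann) : Prop := BddAbove (Prod.snd '' L) ∧ EssentialA (closure L)

/-- `𝒞⁻(U) = 𝔸 \ (𝒰ℒ(U) ∪ ℒ𝒰ℒ(U))`. -/
def Cminus (U : Set Ann) : Set Ann :=
  (upperComp (lowerComp U) ∪ lowerComp (upperComp (lowerComp U)))ᶜ

/-- `𝒞⁺(L) = 𝔸 \ (ℒ𝒰(L) ∪ 𝒰ℒ𝒰(L))`. -/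
def Cplus (L : Set Ann) : Set Ann :=
  (lowerComp (upperComp L) ∪ upperComp (lowerComp (upperComp L)))ᶜ

/-- `f` is non-wandering: no nonempty open set `U` satisfies `fⁿ(U) ∩ U = ∅` for all
`n ≥ 1`. -/
def NonWandering {X : Type*} [TopologicalSpace X] (f : X → X) : Prop :=
  ∀ U : Set X, IsOpen U → U.Nonempty → ∃ n : ℕ, 1 ≤ n ∧ (f^[n] '' U ∩ U).Nonempty

/-- `f` has a periodic point. -/
def HasPeriodicPoint {X : Type*} (f : X → X) : Prop :=
  ∃ (x : X) (q : ℕ), 1 ≤ q ∧ f^[q] x = x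

/-- The covering map `p : ℝ² → 𝔸`. -/
def projA (z : ℝ × ℝ) : Ann := ((z.1 : AddCircle (1 : ℝ)), z.2)

/-- `G` is a lift of `f : 𝔸 → 𝔸`:  `p ∘ G = f ∘ p` and `G (z + (1,0)) = G z + (1,0)`.
The existence of such a lift expresses that `f` is homotopic to the identity. -/
def IsLiftA (f : Ann ≃ₜ Ann) (G : (ℝ × ℝ) ≃ₜ (ℝ × ℝ)) : Prop :=
  (∀ z : ℝ × ℝ, projA (G z) = f (projA z)) ∧
  ∀ z : ℝ × ℝ, G (z + (1, 0)) = G z + (1, 0)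

/-- A simple closed curve in `𝔸`: a subset homeomorphic to the circle. -/
def IsSimpleClosedCurveA (Γ : Set Ann) : Prop :=
  ∃ e : AddCircle (1 : ℝ) → Ann, IsEmbedding e ∧ Γ = Set.range e


theorem bw_exp_const {E : Type*} [TopologicalSpace E] {S : Set E} (hS : IsPreconnected S)
    {u : E → ℂ} (hu : ContinuousOn u S) (h1 : ∀ x ∈ S, Complex.exp (u x) = 1)
    {x y : E} (hx : x ∈ S) (hy : y ∈ S) : u x = u y := by
  have key : ∀ x ∈ S, ∃ n : ℤ, u x = n * (2 * Real.pi * Complex.I) := fun x hx =>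
    Complex.exp_eq_one_iff.1 (h1 x hx)
  have hc : ContinuousOn (fun x => (u x).im / (2 * Real.pi)) S :=
    (Complex.continuous_im.comp_continuousOn hu).div_const _
  have hpi : (2 * Real.pi) ≠ 0 := by positivity
  have hv : ∀ x ∈ S, ∃ n : ℤ, (u x).im / (2 * Real.pi) = n ∧ u x = n * (2 * Real.pi * Complex.I) := by
    intro x hx
    obtain ⟨n, hn⟩ := key x hx
    refine ⟨n, ?_, hn⟩
    rw [hn]; simp
  have hconn := hS.image _ hc
  obtain ⟨n, hn, hn'⟩ := hv x hx
  obtain ⟨m, hm, hm'⟩ := hv y hy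
  have hxi : (n:ℝ) ∈ (fun x => (u x).im / (2 * Real.pi)) '' S := ⟨x, hx, hn⟩
  have hyi : (m:ℝ) ∈ (fun x => (u x).im / (2 * Real.pi)) '' S := ⟨y, hy, hm⟩
  have hno : ∀ a b : ℤ, a < b → (a:ℝ) ∈ (fun x => (u x).im / (2 * Real.pi)) '' S →
      (b:ℝ) ∈ (fun x => (u x).im / (2 * Real.pi)) '' S → False := by
    intro a b hab ha hb
    have hab' : (a:ℝ) + 1 ≤ b := by exact_mod_cast hab
    obtain ⟨w, hw, hw'⟩ := hconn.Icc_subset ha hb (show (a:ℝ) + 1/2 ∈ Set.Icc (a:ℝ) b from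
      ⟨by linarith, by linarith⟩)
    obtain ⟨k, hk, -⟩ := hv w hw
    have : (k:ℝ) = a + 1/2 := by rw [← hk]; exact hw'
    have h2 : ((2 * k : ℤ) : ℝ) = ((2 * a + 1 : ℤ) : ℝ) := by push_cast; linarith
    have h3 : 2 * k = 2 * a + 1 := by exact_mod_cast h2
    omega
  have : n = m := by
    rcases lt_trichotomy n m with h | h | h
    · exact (hno _ _ h hxi hyi).elim
    · exact h
    · exact (hno _ _ h hyi hxi).elim
  rw [hn', hm', this]

theorem bw_exp_const' {E : Type*} [TopologicalSpace E] {S : Set E} (hS : IsPreconnected S)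
    {u v : E → ℂ} (hu : ContinuousOn u S) (hv : ContinuousOn v S)
    (h1 : ∀ x ∈ S, Complex.exp (u x) = Complex.exp (v x))
    {x y : E} (hx : x ∈ S) (hy : y ∈ S) : u x - v x = u y - v y :=
  bw_exp_const hS (hu.sub hv) (fun x hx => by
    show Complex.exp (u x - v x) = 1
    rw [Complex.exp_sub, h1 x hx]; exact div_self (Complex.exp_ne_zero _)) hx hy

theorem bw_lift {E : Type*} [NormedAddCommGroup E] [NormedSpace ℝ E] {S : Set E}
    (hS : Convex ℝ S) {g : E → ℂ} (hg : ContinuousOn g S) (h0 : ∀ x ∈ S, g x ≠ 0) :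
    ∃ l : E → ℂ, ContinuousOn l S ∧ ∀ x ∈ S, Complex.exp (l x) = g x := by
  classical
  rcases S.eq_empty_or_nonempty with rfl | ⟨c, hc⟩
  · exact ⟨fun _ => 0, by simp, by simp⟩
  have hmem : ∀ p : unitInterval × S, c + (p.1 : ℝ) • ((p.2 : E) - c) ∈ S := by
    rintro ⟨t, x⟩
    exact hS.add_smul_sub_mem hc x.2 t.2
  let H : C(unitInterval × S, {z : ℂ // z ≠ 0}) :=
    ⟨fun p => ⟨g (c + (p.1 : ℝ) • ((p.2 : E) - c)), h0 _ (hmem p)⟩, by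
      apply Continuous.subtype_mk
      exact hg.comp_continuous (by fun_prop) hmem⟩
  let f : C(S, ℂ) := ⟨fun _ => Complex.log (g c), continuous_const⟩
  have hH0 : ∀ a : S, H (0, a) = (fun z : ℂ ↦ (⟨_, z.exp_ne_zero⟩ : {z : ℂ // z ≠ 0})) (f a) := by
    intro a
    apply Subtype.ext
    simp [H, f, Complex.exp_log (h0 c hc)]
  let K := Complex.isCoveringMap_exp.liftHomotopy H f hH0
  have hK := Complex.isCoveringMap_exp.liftHomotopy_lifts H f hH0
  refine ⟨fun x => if h : x ∈ S then K (1, ⟨x, h⟩) else 0, ?_, ?_⟩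
  · rw [continuousOn_iff_continuous_domRestrict]
    have : S.domRestrict (fun x => if h : x ∈ S then K (1, ⟨x, h⟩) else 0) = fun x => K (1, x) := by
      ext x; exact dif_pos x.2
    rw [this]; fun_prop
  · intro x hx
    have := congrArg Subtype.val (congrFun hK (1, ⟨x, hx⟩))
    simpa [hx, K, H] using this

/-- `h` has local degree `d`. -/
def BwDeg (h : ℂ ≃ₜ ℂ) (d : ℤ) : Prop :=
  ∃ l : ℂ × ℂ → ℂ, Continuous l ∧ (∀ z t, Complex.exp (l (z, t)) = h (z + Complex.exp t) - h z) ∧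
    ∀ z t, l (z, t + 2 * Real.pi * Complex.I) = l (z, t) + d * (2 * Real.pi * Complex.I)

theorem bw_exp_per (t : ℂ) : Complex.exp (t + 2 * Real.pi * Complex.I) = Complex.exp t := by
  rw [Complex.exp_add, Complex.exp_two_pi_mul_I, mul_one]

theorem bwDeg_exists (h : ℂ ≃ₜ ℂ) : ∃ d, BwDeg h d := by
  obtain ⟨l, hl, he⟩ := bw_lift (E := ℂ × ℂ) (S := Set.univ) convex_univ
    (g := fun p => h (p.1 + Complex.exp p.2) - h p.1) (by fun_prop) (by
      rintro ⟨z, t⟩ - h'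
      have := h.injective (sub_eq_zero.1 h')
      simp [Complex.exp_ne_zero] at this)
  have hl' : Continuous l := by simpa [← continuousOn_univ] using hl
  have he' : ∀ z t, Complex.exp (l (z, t)) = h (z + Complex.exp t) - h z := fun z t => he (z, t) trivial
  have h1 : ∀ p : ℂ × ℂ, Complex.exp (l (p.1, p.2 + 2 * Real.pi * Complex.I)) = Complex.exp (l p) := by
    rintro ⟨z, t⟩; simp only [he', bw_exp_per]
  obtain ⟨d, hd⟩ := Complex.exp_eq_exp_iff_exists_int.1 (h1 (0, 0))
  refine ⟨d, l, hl', he', fun z t => ?_⟩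
  have := bw_exp_const' (S := Set.univ) isPreconnected_univ (u := fun p : ℂ × ℂ => l (p.1, p.2 + 2 * Real.pi * Complex.I))
    (v := l) (by fun_prop) (by fun_prop) (fun p _ => h1 p) (x := (z, t)) (y := (0, 0)) trivial trivial
  simp only at this hd
  rw [hd] at this
  linear_combination this

theorem bwDeg_int {l : ℂ × ℂ → ℂ} {d : ℤ}
    (h : ∀ z t, l (z, t + 2 * Real.pi * Complex.I) = l (z, t) + d * (2 * Real.pi * Complex.I))
    (z t : ℂ) (n : ℤ) :
    l (z, t + n * (2 * Real.pi * Complex.I)) = l (z, t) + n * d * (2 * Real.pi * Complex.I) := by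
  induction n using Int.induction_on with
  | zero => simp
  | succ i ih =>
    have := h z (t + (i:ℤ) * (2 * Real.pi * Complex.I))
    rw [ih] at this
    push_cast at this ⊢
    rw [show t + ((i:ℂ) + 1) * (2 * Real.pi * Complex.I) =
      t + (i:ℂ) * (2 * Real.pi * Complex.I) + 2 * Real.pi * Complex.I by ring, this]
    ring
  | pred i ih =>
    have := h z (t + (-(i:ℤ) - 1 : ℤ) * (2 * Real.pi * Complex.I))
    rw [show t + ((-(i:ℤ) - 1 : ℤ):ℂ) * (2 * Real.pi * Complex.I) + 2 * Real.pi * Complex.I =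
      t + ((-(i:ℤ):ℤ):ℂ) * (2 * Real.pi * Complex.I) by push_cast; ring, ih] at this
    push_cast at this ⊢
    linear_combination -this

theorem bwDeg_mul {h k : ℂ ≃ₜ ℂ} {d e : ℤ} (hh : BwDeg h d) (hk : BwDeg k e) :
    BwDeg (h * k) (d * e) := by
  obtain ⟨l, hl, hle, hlp⟩ := hh
  obtain ⟨m, hm, hme, hmp⟩ := hk
  refine ⟨fun p => l (k p.1, m p), by fun_prop, fun z t => ?_, fun z t => ?_⟩
  · simp only [hle, hme, Homeomorph.mul_apply]; simp
  · simp only [hmp, bwDeg_int hlp]; push_cast; ring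

theorem bwDeg_one : BwDeg 1 1 :=
  ⟨fun p => p.2, by fun_prop, fun z t => by simp, fun z t => by simp⟩

theorem bwDeg_unique {h : ℂ ≃ₜ ℂ} {d e : ℤ} (hh : BwDeg h d) (hk : BwDeg h e) : d = e := by
  obtain ⟨l, hl, hle, hlp⟩ := hh
  obtain ⟨m, hm, hme, hmp⟩ := hk
  have := bw_exp_const' (S := Set.univ) isPreconnected_univ (u := l)
    (v := m) (by fun_prop) (by fun_prop) (fun p _ => by rw [hle p.1 p.2, hme p.1 p.2])
    (x := (0, 0 + 2 * Real.pi * Complex.I)) (y := (0, 0)) trivial trivial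
  rw [hlp, hmp] at this
  have h2 : ((d:ℂ) - e) * (2 * Real.pi * Complex.I) = 0 := by linear_combination this
  rcases mul_eq_zero.1 h2 with h3 | h3
  · exact_mod_cast sub_eq_zero.1 h3
  · exact (Complex.two_pi_I_ne_zero h3).elim

theorem bwDeg_sq (h : ℂ ≃ₜ ℂ) : BwDeg (h * h) 1 := by
  obtain ⟨d, hd⟩ := bwDeg_exists h
  obtain ⟨e, he⟩ := bwDeg_exists h⁻¹
  have h1 := bwDeg_mul hd he
  rw [mul_inv_cancel] at h1
  have h2 := bwDeg_unique h1 bwDeg_one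
  have := bwDeg_mul hd hd
  rcases Int.eq_one_or_neg_one_of_mul_eq_one h2 with rfl | rfl <;> simpa using this

theorem bwDeg_inv {h : ℂ ≃ₜ ℂ} (hh : BwDeg h 1) : BwDeg h⁻¹ 1 := by
  obtain ⟨e, he⟩ := bwDeg_exists h⁻¹
  have h1 := bwDeg_mul hh he
  rw [mul_inv_cancel] at h1
  have h2 := bwDeg_unique h1 bwDeg_one
  have : e = 1 := by simpa using h2
  exact this ▸ he

/-- Moving the centre of a ball. -/
theorem bw_push (c v : ℂ) (R : ℝ) (hv : ‖v‖ < R) :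
    ∃ φ : ℂ ≃ₜ ℂ, BwDeg φ 1 ∧ φ c = c + v ∧ ∀ z, R ≤ ‖z - c‖ → φ z = z := by
  have hR : 0 < R := (norm_nonneg v).trans_lt hv
  let ψ : ℂ → ℝ := fun z => max 0 (1 - ‖z - c‖ / R)
  have hψ : ∀ x y, |ψ x - ψ y| ≤ ‖x - y‖ / R := by
    intro x y
    refine (abs_max_sub_max_le_max _ _ _ _).trans ?_
    rw [sub_self, abs_zero, max_eq_right (abs_nonneg _)]
    rw [show 1 - ‖x - c‖ / R - (1 - ‖y - c‖ / R) = (‖y - c‖ - ‖x - c‖) / R by ring, abs_div,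
      abs_of_pos hR]
    gcongr
    refine (abs_norm_sub_norm_le _ _).trans ?_
    rw [show y - c - (x - c) = -(x - y) by ring, norm_neg]
  let F : ℂ → ℂ := fun z => z + ψ z * v
  have hF : ∀ x y, ‖F x - F y - (x - y)‖ ≤ (‖v‖ / R) * ‖x - y‖ := by
    intro x y
    have : F x - F y - (x - y) = ((ψ x - ψ y : ℝ) : ℂ) * v := by simp only [F]; push_cast; ring
    rw [this, norm_mul, Complex.norm_real, Real.norm_eq_abs]
    calc _ ≤ ‖x - y‖ / R * ‖v‖ := by gcongr; exact hψ x y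
      _ = _ := by ring
  have hlt : ‖v‖ / R < 1 := by rw [div_lt_one hR]; exact hv
  have happ : ApproximatesLinearOn F ((ContinuousLinearEquiv.refl ℝ ℂ : ℂ ≃L[ℝ] ℂ) : ℂ →L[ℝ] ℂ) Set.univ
      (Real.toNNReal (‖v‖ / R)) := by
    intro x _ y _
    rw [Real.coe_toNNReal _ (by positivity)]
    exact hF x y
  let φ : ℂ ≃ₜ ℂ := happ.toHomeomorph F (Or.inr (by
    rw [← NNReal.coe_lt_coe]
    have hn : ‖((ContinuousLinearEquiv.refl ℝ ℂ).symm : ℂ →L[ℝ] ℂ)‖₊ = 1 := by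
      rw [← NNReal.coe_inj]
      exact ContinuousLinearMap.norm_id (𝕜 := ℝ) (E := ℂ)
    rw [hn, Real.coe_toNNReal _ (by positivity)]; simpa using hlt))
  have hφ : ∀ z, φ z = F z := fun z => rfl
  refine ⟨φ, ?_, ?_, ?_⟩
  · let δ : ℂ × ℂ → ℂ := fun p => (φ (p.1 + Complex.exp p.2) - φ p.1) / Complex.exp p.2
    have hδ : ∀ p, δ p ∈ Complex.slitPlane := by
      rintro ⟨z, t⟩
      apply Complex.ball_one_subset_slitPlane
      rw [Metric.mem_ball, dist_eq_norm]
      have h1 := hF (z + Complex.exp t) z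
      have h2 : δ (z, t) - 1 = (F (z + Complex.exp t) - F z - (z + Complex.exp t - z)) / Complex.exp t := by
        simp only [δ, hφ]; field_simp [Complex.exp_ne_zero]; ring
      rw [h2, norm_div, div_lt_iff₀ (norm_pos_iff.2 (Complex.exp_ne_zero _)), one_mul]
      refine h1.trans_lt ?_
      rw [add_sub_cancel_left]
      have := norm_pos_iff.2 (Complex.exp_ne_zero t)
      nlinarith
    have hδc : Continuous δ := by
      apply Continuous.div
      · fun_prop
      · fun_prop
      · intro; exact Complex.exp_ne_zero _
    refine ⟨fun p => p.2 + Complex.log (δ p), ?_, ?_, ?_⟩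
    · exact continuous_snd.add (hδc.clog hδ)
    · intro z t
      rw [Complex.exp_add, Complex.exp_log (Complex.slitPlane_ne_zero (hδ _))]
      simp only [δ]; field_simp [Complex.exp_ne_zero]
    · intro z t
      simp only [δ, bw_exp_per]; push_cast; ring
  · simp [hφ, F, ψ]
  · intro z hz
    have : ψ z = 0 := by
      apply max_eq_left
      rw [sub_nonpos, le_div_iff₀ hR]; linarith
    simp [hφ, F, this]


theorem bw_core_aux (h : ℂ ≃ₜ ℂ) (hd : BwDeg h 1) (hfix : ∀ z, h z ≠ z) (J : ℝ → ℂ)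
    (hJ : Continuous J) (hJ1 : ∀ t, J (t + 1) = h (J t))
    (hinj : ∀ t t', t < t' → t' ≤ t + 1 → J t ≠ J t')
    (s T : ℝ) (hsT : s + 1 < T) (heq : J s = J T)
    (hsimple : ∀ t t', s ≤ t → t < t' → t' ≤ T → t' - t < T - s → J t ≠ J t') : False := by
  obtain ⟨l₀, hl₀, hle₀, hlp₀⟩ := hd
  obtain ⟨Θ, hΘ', hΘe'⟩ := bw_lift (S := (Set.univ : Set ℂ)) convex_univ
    (g := fun z => h z - z) (by fun_prop) (fun z _ => sub_ne_zero.2 (hfix z))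
  have hΘ : Continuous Θ := by simpa [← continuousOn_univ] using hΘ'
  have hΘe : ∀ z, Complex.exp (Θ z) = h z - z := fun z => hΘe' z trivial
  -- normalise l
  obtain ⟨l, hl, hle, hlp, hls⟩ : ∃ l : ℂ × ℂ → ℂ, Continuous l ∧
      (∀ z t, Complex.exp (l (z, t)) = h (z + Complex.exp t) - h z) ∧
      (∀ z t, l (z, t + 2 * Real.pi * Complex.I) = l (z, t) + (1:ℤ) * (2 * Real.pi * Complex.I)) ∧
      ∀ z, l (z, Θ z) = Θ (h z) := by
    have h1 : ∀ z, Complex.exp (l₀ (z, Θ z)) = Complex.exp (Θ (h z)) := by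
      intro z; rw [hle₀, hΘe, hΘe]; simp
    have h2 : ∀ z, l₀ (z, Θ z) - Θ (h z) = l₀ (0, Θ 0) - Θ (h 0) := fun z =>
      bw_exp_const' (S := Set.univ) isPreconnected_univ (u := fun z => l₀ (z, Θ z))
        (v := fun z => Θ (h z)) (by fun_prop) (by fun_prop) (fun z _ => h1 z) trivial trivial
    refine ⟨fun p => l₀ p - (l₀ (0, Θ 0) - Θ (h 0)), by fun_prop, fun z t => ?_, fun z t => ?_,
      fun z => ?_⟩
    · simp only
      rw [Complex.exp_sub, hle₀, Complex.exp_sub, h1, div_self (Complex.exp_ne_zero _), div_one]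
    · simp only [hlp₀]; ring
    · simp only; rw [← h2 z]; ring
  -- symmetry
  have hsym : ∀ z t, l (z + Complex.exp t, t + Real.pi * Complex.I) = l (z, t) + Real.pi * Complex.I := by
    have hpi : ∀ t : ℂ, Complex.exp (t + Real.pi * Complex.I) = - Complex.exp t := by
      intro t; rw [Complex.exp_add, Complex.exp_pi_mul_I]; ring
    have h1 : ∀ z t, Complex.exp (l (z + Complex.exp t, t + Real.pi * Complex.I)) =
        Complex.exp (l (z, t) + Real.pi * Complex.I) := by
      intro z t
      rw [hle, hpi, hpi, hle]; simp
    have h2 : ∀ p q : ℂ × ℂ, l (p.1 + Complex.exp p.2, p.2 + Real.pi * Complex.I)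
        - (l p + Real.pi * Complex.I) = l (q.1 + Complex.exp q.2, q.2 + Real.pi * Complex.I)
        - (l q + Real.pi * Complex.I) := fun p q =>
      bw_exp_const' (S := Set.univ) isPreconnected_univ
        (u := fun p : ℂ × ℂ => l (p.1 + Complex.exp p.2, p.2 + Real.pi * Complex.I))
        (v := fun p => l p + Real.pi * Complex.I) (by fun_prop) (by fun_prop)
        (fun p _ => h1 p.1 p.2) trivial trivial
    intro z t
    have h3 := h2 (z, t) (z + Complex.exp t, t + Real.pi * Complex.I)
    simp only [hpi] at h3
    rw [show z + Complex.exp t + -Complex.exp t = z by ring,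
      show t + Real.pi * Complex.I + Real.pi * Complex.I = t + 2 * Real.pi * Complex.I by ring,
      hlp] at h3
    push_cast at h3
    linear_combination (1/2) * h3
  have hlint := bwDeg_int hlp
  -- strip
  let St : Set (ℝ × ℝ) := {p | p.1 < p.2 ∧ p.2 ≤ p.1 + 1}
  have hSt : Convex ℝ St := by
    rintro ⟨x1, x2⟩ ⟨hx1, hx2⟩ ⟨y1, y2⟩ ⟨hy1, hy2⟩ a b ha hb hab
    simp only [St, Set.mem_ofPred_eq, Prod.smul_mk, Prod.mk_add_mk, smul_eq_mul] at *
    constructor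
    · rcases ha.eq_or_lt with rfl | ha'
      · have : b = 1 := by linarith
        subst this; linarith
      · nlinarith
    · nlinarith
  obtain ⟨Ψ, hΨc, hΨe, hΨn⟩ : ∃ Ψ : ℝ × ℝ → ℂ, ContinuousOn Ψ St ∧
      (∀ t t', t < t' → t' ≤ t + 1 → Complex.exp (Ψ (t, t')) = J t' - J t) ∧
      ∀ t, Ψ (t, t + 1) = Θ (J t) := by
    obtain ⟨Ψ, hΨc, hΨe⟩ := bw_lift hSt (g := fun p => J p.2 - J p.1) (by fun_prop)
      (fun p hp => sub_ne_zero.2 (hinj _ _ hp.1 hp.2).symm)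
    have hmem : ∀ t : ℝ, (t, t + 1) ∈ St := fun t => ⟨by simp, by simp⟩
    have h1 : ∀ t, Complex.exp (Ψ (t, t + 1)) = Complex.exp (Θ (J t)) := by
      intro t; rw [hΨe _ (hmem t), hΘe, ← hJ1]
    have h2 : ∀ t, Ψ (t, t + 1) - Θ (J t) = Ψ (0, 0 + 1) - Θ (J 0) := fun t =>
      bw_exp_const' (S := (Set.univ : Set ℝ)) isPreconnected_univ (u := fun t => Ψ (t, t + 1))
        (v := fun t => Θ (J t)) (hΨc.comp (by fun_prop) (fun t _ => hmem t)) (by fun_prop)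
        (fun t _ => h1 t) trivial trivial
    refine ⟨fun p => Ψ p - (Ψ (0, 0 + 1) - Θ (J 0)), by fun_prop, fun t t' h1' h2' => ?_, fun t => ?_⟩
    · simp only
      rw [Complex.exp_sub, Complex.exp_sub, h1, div_self (Complex.exp_ne_zero _), div_one]
      exact hΨe (t, t') ⟨h1', h2'⟩
    · simp only; rw [← h2 t]; ring
  have hΨs : ∀ t t', t < t' → t' ≤ t + 1 → l (J t, Ψ (t, t')) = Ψ (t + 1, t' + 1) := by
    intro t t' h1 h2
    have hsh : ∀ p ∈ St, (p.1 + 1, p.2 + 1) ∈ St := by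
      rintro ⟨a, b⟩ ⟨ha, hb⟩
      simp only [St, Set.mem_ofPred_eq] at *
      constructor <;> linarith
    have h3 := bw_exp_const' hSt.isPreconnected (u := fun p => l (J p.1, Ψ p))
      (v := fun p => Ψ (p.1 + 1, p.2 + 1)) (hl.comp_continuousOn (by fun_prop))
      (hΨc.comp (by fun_prop) hsh)
      (by
        rintro ⟨a, b⟩ hab
        have h4 := hsh _ hab
        simp only [hle]
        rw [hΨe _ _ hab.1 hab.2, hΨe _ _ h4.1 h4.2, hJ1, hJ1]; simp)
      (x := (t, t')) (y := (t, t + 1)) ⟨h1, h2⟩ ⟨by simp, by simp⟩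
    simp only [hΨn, hls] at h3
    rw [hJ1, sub_self] at h3
    exact sub_eq_zero.1 h3
  -- triangle
  let Tr : Set (ℝ × ℝ) := {p | s ≤ p.1 ∧ p.1 < p.2 ∧ p.2 ≤ T ∧ p.2 - p.1 < T - s}
  have hTr : Convex ℝ Tr := by
    rintro ⟨x1, x2⟩ ⟨hx1, hx2, hx3, hx4⟩ ⟨y1, y2⟩ ⟨hy1, hy2, hy3, hy4⟩ a b ha hb hab
    simp only [Tr, Set.mem_ofPred_eq, Prod.smul_mk, Prod.mk_add_mk, smul_eq_mul] at *
    have hb' : b = 1 - a := by linarith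
    subst hb'
    refine ⟨by nlinarith, ?_, by nlinarith, ?_⟩
    all_goals
      rcases ha.eq_or_lt with rfl | ha'
      · linarith
      · nlinarith
  obtain ⟨Φ, hΦc, hΦe, hΦΨ⟩ : ∃ Φ : ℝ × ℝ → ℂ, ContinuousOn Φ Tr ∧
      (∀ p ∈ Tr, Complex.exp (Φ p) = J p.2 - J p.1) ∧
      ∀ p ∈ Tr, p.2 ≤ p.1 + 1 → Φ p = Ψ p := by
    obtain ⟨Φ, hΦc, hΦe⟩ := bw_lift hTr (g := fun p => J p.2 - J p.1) (by fun_prop)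
      (fun p hp => sub_ne_zero.2 (hsimple _ _ hp.1 hp.2.1 hp.2.2.1 hp.2.2.2).symm)
    have h0 : (s, s + 1) ∈ Tr ∩ St := ⟨⟨by simp, by simp, by simp; linarith, by simp; linarith⟩,
      by simp, by simp⟩
    have h1 : ∀ p ∈ Tr ∩ St, Complex.exp (Φ p) = Complex.exp (Ψ p) := by
      intro p hp
      rw [hΦe _ hp.1]; exact (hΨe _ _ hp.2.1 hp.2.2).symm
    have h2 : ∀ p ∈ Tr ∩ St, Φ p - Ψ p = Φ (s, s + 1) - Ψ (s, s + 1) := fun p hp =>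
      bw_exp_const' (hTr.inter hSt).isPreconnected (hΦc.mono Set.inter_subset_left)
        (hΨc.mono Set.inter_subset_right) h1 hp h0
    refine ⟨fun p => Φ p - (Φ (s, s + 1) - Ψ (s, s + 1)), by fun_prop, fun p hp => ?_, fun p hp hp' => ?_⟩
    · simp only
      rw [Complex.exp_sub, Complex.exp_sub, h1 _ h0, div_self (Complex.exp_ne_zero _), div_one]
      exact hΦe p hp
    · simp only; rw [← h2 p ⟨hp, hp.2.1, hp'⟩]; ring
  have hm1 : (s, s + 1) ∈ Tr := ⟨by simp, by simp, by simp; linarith, by simp; linarith⟩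
  have hm2 : (s, T - 1) ∈ Tr := ⟨by simp, by simp; linarith, by simp, by simp⟩
  have hm3 : (T - 1, T) ∈ Tr := ⟨by simp; linarith, by simp, by simp, by simp; linarith⟩
  have hm4 : (s + 1, T) ∈ Tr := ⟨by simp, by simp; linarith, by simp, by simp⟩
  -- shift on the triangle
  have hshift : l (J s, Φ (s, T - 1)) = Φ (s + 1, T) := by
    let Q : Set (ℝ × ℝ) := {p | s ≤ p.1 ∧ p.1 < p.2 ∧ p.2 ≤ T - 1}
    have hQ : Convex ℝ Q := by
      rintro ⟨x1, x2⟩ ⟨hx1, hx2, hx3⟩ ⟨y1, y2⟩ ⟨hy1, hy2, hy3⟩ a b ha hb hab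
      simp only [Q, Set.mem_ofPred_eq, Prod.smul_mk, Prod.mk_add_mk, smul_eq_mul] at *
      have hb' : b = 1 - a := by linarith
      subst hb'
      refine ⟨by nlinarith, ?_, by nlinarith⟩
      rcases ha.eq_or_lt with rfl | ha'
      · linarith
      · nlinarith
    have hQT : Q ⊆ Tr := by
      rintro ⟨a, b⟩ ⟨h1, h2, h3⟩
      simp only [Tr, Set.mem_ofPred_eq] at *
      refine ⟨h1, h2, by linarith, by linarith⟩
    have hsh : ∀ p ∈ Q, (p.1 + 1, p.2 + 1) ∈ Tr := by
      rintro ⟨a, b⟩ ⟨h1, h2, h3⟩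
      simp only [Tr, Set.mem_ofPred_eq] at *
      refine ⟨by linarith, by linarith, by linarith, by linarith⟩
    obtain ⟨m, hm, hm', hm''⟩ : ∃ m, s < m ∧ m ≤ s + 1 ∧ m ≤ T - 1 :=
      ⟨min (s + 1) (T - 1), lt_min (by linarith) (by linarith), min_le_left _ _, min_le_right _ _⟩
    have hmQ : (s, m) ∈ Q := ⟨le_rfl, hm, hm''⟩
    have h3 := bw_exp_const' hQ.isPreconnected (u := fun p => l (J p.1, Φ p))
      (v := fun p => Φ (p.1 + 1, p.2 + 1))
      (hl.comp_continuousOn (((hJ.comp continuous_fst).continuousOn).prodMk (hΦc.mono hQT)))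
      (hΦc.comp (by fun_prop) hsh)
      (by
        rintro ⟨a, b⟩ hab
        simp only [hle]
        rw [hΦe _ (hQT hab), hΦe _ (hsh _ hab), hJ1, hJ1]; simp)
      (x := (s, T - 1)) (y := (s, m)) ⟨by simp, by simp; linarith, by simp⟩ hmQ
    simp only at h3
    rw [hΦΨ (s, m) (hQT hmQ) hm', hΦΨ (s + 1, m + 1) (hsh _ hmQ) (by simp; linarith),
      hΨs _ _ hm hm', sub_self, sub_eq_zero] at h3
    rw [h3]; simp
  -- half turn
  have hhalf : Φ (s + 1, T) - Φ (s, s + 1) = Φ (T - 1, T) - Φ (s, T - 1) := by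
    have hmem : ∀ r ∈ Set.Ioo s T, (r, T) ∈ Tr ∧ (s, r) ∈ Tr := by
      rintro r ⟨h1, h2⟩
      simp only [Tr, Set.mem_ofPred_eq]
      refine ⟨⟨by linarith, by linarith, by linarith, by linarith⟩,
        ⟨by linarith, by linarith, by linarith, by linarith⟩⟩
    have h3 := bw_exp_const' (S := Set.Ioo s T) isPreconnected_Ioo (u := fun r => Φ (r, T))
      (v := fun r => Φ (s, r) + Real.pi * Complex.I)
      (hΦc.comp (by fun_prop) fun r hr => (hmem r hr).1)
      ((hΦc.comp (by fun_prop) fun r hr => (hmem r hr).2).add continuousOn_const)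
      (by
        intro r hr
        rw [hΦe _ (hmem r hr).1, Complex.exp_add, hΦe _ (hmem r hr).2, Complex.exp_pi_mul_I]
        simp only; rw [heq]; ring)
      (x := s + 1) (y := T - 1) ⟨by linarith, by linarith⟩ ⟨by linarith, by linarith⟩
    linear_combination h3
  obtain ⟨c, hc⟩ : ∃ c, c = Φ (T - 1, T) - Φ (s, T - 1) := ⟨_, rfl⟩
  have hJT : J T = h (J (T - 1)) := by rw [← hJ1]; simp
  have hce : Complex.exp c = -1 := by
    have hne : J (T - 1) - J s ≠ 0 := by
      rw [← hΦe _ hm2]; exact Complex.exp_ne_zero _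
    rw [hc, Complex.exp_sub, hΦe _ hm3, hΦe _ hm2]
    simp only; rw [← heq, div_eq_iff hne]; ring
  obtain ⟨m, hm⟩ : ∃ m : ℤ, c = Real.pi * Complex.I + m * (2 * Real.pi * Complex.I) := by
    rw [← Complex.exp_pi_mul_I] at hce
    exact Complex.exp_eq_exp_iff_exists_int.1 hce
  have hu : J s + Complex.exp (Φ (s, T - 1)) = J (T - 1) := by rw [hΦe _ hm2]; simp
  have e1 : Θ (J (T - 1)) = Φ (T - 1, T) := by
    rw [hΦΨ _ hm3 (by simp)]
    have := hΨn (T - 1)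
    rw [← this]; simp
  have e2 : Θ (J s) = Φ (s, s + 1) := by rw [hΦΨ _ hm1 (by simp)]; exact (hΨn s).symm
  have e3 := hls (J (T - 1))
  rw [← hJT, ← heq, e2, e1] at e3
  have e4 := hsym (J s) (Φ (s, T - 1))
  rw [hu, hshift] at e4
  have e5 : Φ (T - 1, T) = Φ (s, T - 1) + Real.pi * Complex.I + m * (2 * Real.pi * Complex.I) := by
    rw [add_assoc, ← hm, hc]; ring
  rw [e5, hlint, e4] at e3
  have : 2 * c = 0 := by
    have : Φ (s + 1, T) - Φ (s, s + 1) = c := by rw [hhalf, hc]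
    push_cast at e3
    linear_combination hm - this + e3
  have hc0 : c = 0 := by simpa using this
  rw [hc0] at hce
  norm_num at hce

theorem bw_core (h : ℂ ≃ₜ ℂ) (hd : BwDeg h 1) (hfix : ∀ z, h z ≠ z) (J : ℝ → ℂ)
    (hJ : Continuous J) (hJ1 : ∀ t, J (t + 1) = h (J t))
    (hinj : ∀ t t', t < t' → t' ≤ t + 1 → J t ≠ J t')
    (a b : ℝ) (hab : a < b) (heq : J a = J b) : False := by
  have hgap : ∀ t t', t < t' → J t = J t' → t + 1 < t' := by
    intro t t' h1 h2
    by_contra h3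
    exact hinj t t' h1 (not_lt.1 h3) h2
  let S : Set (ℝ × ℝ) := (Set.Icc a b ×ˢ Set.Icc a b) ∩ {p | p.1 + 1 ≤ p.2 ∧ J p.1 = J p.2}
  have hS : IsCompact S := by
    apply (isCompact_Icc.prod isCompact_Icc).inter_right
    exact (isClosed_le (f := fun p : ℝ × ℝ => p.1 + 1) (g := fun p => p.2) (by fun_prop)
      (by fun_prop)).inter (isClosed_eq (f := fun p : ℝ × ℝ => J p.1) (g := fun p => J p.2)
      (by fun_prop) (by fun_prop))
  have hne : S.Nonempty := ⟨(a, b), ⟨⟨le_rfl, hab.le⟩, ⟨hab.le, le_rfl⟩⟩, (hgap _ _ hab heq).le, heq⟩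
  obtain ⟨⟨s, T⟩, ⟨⟨⟨hs1, hs2⟩, hT1, hT2⟩, h3, h4⟩, hmin⟩ :=
    hS.exists_isMinOn hne (f := fun p => p.2 - p.1) (by fun_prop)
  simp only at *
  refine bw_core_aux h hd hfix J hJ hJ1 hinj s T (hgap _ _ (by linarith) h4) h4 ?_
  intro t t' ht htt ht' hlt hJJ
  have hmem : (t, t') ∈ S := ⟨⟨⟨by simp; linarith, by simp; linarith⟩, by simp; linarith,
    by simp; linarith⟩, (hgap _ _ htt hJJ).le, hJJ⟩
  have := hmin hmem
  simp only [Set.mem_ofPred_eq] at this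
  linarith


theorem bw_periodic (h : ℂ ≃ₜ ℂ) (hd : BwDeg h 1) (hfix : ∀ z, h z ≠ z) (x : ℂ) (n : ℕ)
    (hn : 1 ≤ n) (hx : (h ^ n) x = x) : False := by
  obtain ⟨w, hw⟩ : ∃ w, ∀ v, max ‖w - x‖ ‖h w - x‖ ≤ max ‖v - x‖ ‖h v - x‖ := by
    apply Continuous.exists_forall_le (f := fun v => max ‖v - x‖ ‖h v - x‖) (by fun_prop)
    refine tendsto_atTop_mono (fun v => le_max_left _ _) ?_
    simpa [dist_eq_norm] using (tendsto_dist_right_cocompact_atTop x)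
  obtain ⟨r, hr⟩ : ∃ r, r = max ‖w - x‖ ‖h w - x‖ := ⟨_, rfl⟩
  rw [← hr] at hw
  have hr0 : 0 < r := by
    rw [hr]
    by_contra h0
    have h1 := le_max_left ‖w - x‖ ‖h w - x‖
    have h2 := le_max_right ‖w - x‖ ‖h w - x‖
    have h3 : w = x := sub_eq_zero.1 (norm_le_zero_iff.1 (by linarith))
    have h4 : h w = x := sub_eq_zero.1 (norm_le_zero_iff.1 (by linarith))
    exact hfix w (h4.trans h3.symm)
  have hpert : ∀ u : ℂ, Tendsto (fun e : ℝ => x + ((1 - e : ℝ) : ℂ) * (u - x)) (𝓝[>] 0) (𝓝 u) := by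
    intro u
    have : Continuous (fun e : ℝ => x + ((1 - e : ℝ) : ℂ) * (u - x)) := by fun_prop
    have h1 := this.tendsto 0
    simp only [sub_zero, Complex.ofReal_one, one_mul, add_sub_cancel] at h1
    exact h1.mono_left nhdsWithin_le_nhds
  have hpn : ∀ (u : ℂ) (e : ℝ), 0 < e → e < 1 → ‖u - x‖ = r →
      ‖x + ((1 - e : ℝ) : ℂ) * (u - x) - x‖ < r := by
    intro u e h1 h2 h3
    rw [add_sub_cancel_left, norm_mul, h3, Complex.norm_real, Real.norm_eq_abs, abs_of_pos (by linarith)]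
    nlinarith
  have hev1 : ∀ᶠ e : ℝ in 𝓝[>] 0, 0 < e ∧ e < 1 := by
    filter_upwards [Ioo_mem_nhdsGT (show (0:ℝ) < 1 by norm_num)] with e he using he
  have hbd : ∀ v, ‖v - x‖ ≤ r → ‖h v - x‖ ≤ r → ‖v - x‖ = r ∧ ‖h v - x‖ = r := by
    intro v h1 h2
    by_contra hcon
    rcases h1.lt_or_eq with h1' | h1'
    · have h2' : ‖h v - x‖ = r := by
        by_contra h3
        have h3' := lt_of_le_of_ne h2 h3
        exact absurd (hw v) (not_le.2 (max_lt h1' h3'))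
      have ht : Tendsto (fun e : ℝ => ‖h.symm (x + ((1 - e : ℝ) : ℂ) * (h v - x)) - x‖) (𝓝[>] 0)
          (𝓝 ‖v - x‖) := by
        have := (h.symm.continuous.tendsto _).comp (hpert (h v))
        rw [h.symm_apply_apply] at this
        exact (this.sub_const x).norm
      obtain ⟨e, he, he1, he2⟩ := ((ht.eventually_lt_const h1').and hev1).exists
      have := hw (h.symm (x + ((1 - e : ℝ) : ℂ) * (h v - x)))
      rw [h.apply_symm_apply] at this
      exact absurd this (not_le.2 (max_lt he (hpn _ _ he1 he2 h2')))
    · have h2' : ‖h v - x‖ < r := lt_of_le_of_ne h2 (fun h3 => hcon ⟨h1', h3⟩)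
      have ht : Tendsto (fun e : ℝ => ‖h (x + ((1 - e : ℝ) : ℂ) * (v - x)) - x‖) (𝓝[>] 0)
          (𝓝 ‖h v - x‖) :=
        (((h.continuous.tendsto _).comp (hpert v)).sub_const x).norm
      obtain ⟨e, he, he1, he2⟩ := ((ht.eventually_lt_const h2').and hev1).exists
      exact absurd (hw _) (not_le.2 (max_lt (hpn _ _ he1 he2 h1') he))
  obtain ⟨hwr, hzr⟩ := hbd w (by rw [hr]; exact le_max_left _ _) (by rw [hr]; exact le_max_right _ _)
  -- the arc
  let α : ℝ → ℂ := fun t => x + ((max (1 - 2 * t) 0 : ℝ) : ℂ) * (w - x) +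
    ((max (2 * t - 1) 0 : ℝ) : ℂ) * (h w - x)
  have hα : Continuous α := by fun_prop
  have hα1 : ∀ t, t ≤ 1/2 → α t = x + ((1 - 2 * t : ℝ) : ℂ) * (w - x) := by
    intro t ht
    simp only [α]
    rw [max_eq_left (by linarith), max_eq_right (by linarith)]; simp
  have hα2 : ∀ t, 1/2 ≤ t → α t = x + ((2 * t - 1 : ℝ) : ℂ) * (h w - x) := by
    intro t ht
    simp only [α]
    rw [max_eq_right (by linarith), max_eq_left (by linarith)]; simp
  have hαn : ∀ t, ‖α t - x‖ = |1 - 2 * t| * r := by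
    intro t
    rcases le_total t (1/2) with ht | ht
    · rw [hα1 t ht, add_sub_cancel_left, norm_mul, hwr, Complex.norm_real, Real.norm_eq_abs]
    · rw [hα2 t ht, add_sub_cancel_left, norm_mul, hzr, Complex.norm_real, Real.norm_eq_abs,
        abs_sub_comm]
  have hα0 : α 0 = w := by rw [hα1 0 (by norm_num)]; simp
  have hαe : α 1 = h (α 0) := by rw [hα0, hα2 1 (by norm_num)]; norm_num
  have hαinj : ∀ t t', 0 ≤ t → t < t' → t' ≤ 1 → α t ≠ α t' := by
    intro t t' h0 h1 h2 h3
    have h4 : |1 - 2 * t| = |1 - 2 * t'| := by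
      have := congrArg (fun u => ‖u - x‖) h3
      simp only [hαn] at this
      exact mul_right_cancel₀ hr0.ne' this
    have h5 : t' = 1 - t := by
      rcases abs_eq_abs.1 h4 with h5 | h5 <;> linarith
    have h6 : t < 1/2 := by linarith
    rw [hα1 t h6.le, hα2 t' (by linarith), h5, show 2 * (1 - t) - 1 = 1 - 2 * t by ring] at h3
    have h7 := mul_left_cancel₀ (by exact_mod_cast (by linarith : 1 - 2 * t ≠ 0)) (add_left_cancel h3)
    exact hfix w (sub_left_injective h7).symm
  let J : ℝ → ℂ := fun t => (h ^ ⌊t⌋) (α (Int.fract t))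
  have hJ1 : ∀ t, J (t + 1) = h (J t) := by
    intro t
    simp only [J]
    rw [Int.floor_add_one, Int.fract_add_one, add_comm, zpow_one_add]; rfl
  have hJn : ∀ (t : ℝ) (i : ℤ), J (t + i) = (h ^ i) (J t) := by
    intro t i
    simp only [J]
    rw [Int.floor_add_intCast, Int.fract_add_intCast, add_comm, zpow_add]; rfl
  have hJ01 : ∀ t, 0 ≤ t → t < 1 → J t = α t := by
    intro t h0 h1
    simp only [J]
    rw [Int.fract_eq_self.2 ⟨h0, h1⟩, Int.floor_eq_zero_iff.2 ⟨h0, h1⟩]; rfl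
  have hJ12 : ∀ t, 1 ≤ t → t < 2 → J t = h (α (t - 1)) := by
    intro t h0 h1
    rw [← hJ01 (t - 1) (by linarith) (by linarith), ← hJ1]; simp
  let K : ℝ → ℂ := fun t => if 1 ≤ t then h (α (t - 1)) else α t
  have hK : Continuous K := by
    refine Continuous.if_le (by fun_prop) (by fun_prop) (by fun_prop) (by fun_prop) ?_
    intro t ht
    rw [← ht, hαe]; simp
  have hJK : ∀ t, 0 < t → t < 2 → J t = K t := by
    intro t h0 h1
    by_cases h2 : 1 ≤ t
    · simp only [K, if_pos h2]; exact hJ12 t h2 h1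
    · simp only [K, if_neg h2]; exact hJ01 t h0.le (not_le.1 h2)
  have hJc : Continuous J := by
    rw [continuous_iff_continuousAt]
    intro t
    let i : ℤ := ⌊t + 1/2⌋ - 1
    have hi1 : (i:ℝ) + 1 ≤ t + 1/2 := by
      simp only [i]; push_cast; have := Int.floor_le (t + 1/2); linarith
    have hi2 : t + 1/2 < (i:ℝ) + 2 := by
      simp only [i]; push_cast; have := Int.lt_floor_add_one (t + 1/2); linarith
    have hcK : Continuous (fun u : ℝ => (h ^ i) (K (u - i))) := by fun_prop
    apply hcK.continuousAt.congr
    filter_upwards [Ioo_mem_nhds (show (i:ℝ) < t by linarith) (show t < i + 2 by linarith)] with u hu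
    rw [← hJK (u - i) (by linarith [hu.1]) (by linarith [hu.2]), ← hJn]; simp
  have hinj0 : ∀ t t', 0 ≤ t → t < 1 → t < t' → t' ≤ t + 1 → J t ≠ J t' := by
    intro t t' h0 h1 h2 h3 h4
    rw [hJ01 t h0 h1] at h4
    by_cases h5 : t' < 1
    · rw [hJ01 t' (by linarith) h5] at h4
      exact hαinj t t' h0 h2 h5.le h4
    · push Not at h5
      rw [hJ12 t' h5 (by linarith)] at h4
      have ha : ∀ s, 0 ≤ s → s ≤ 1 → ‖α s - x‖ ≤ r := by
        intro s hs1 hs2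
        rw [hαn]
        have : |1 - 2 * s| ≤ 1 := abs_le.2 ⟨by linarith, by linarith⟩
        nlinarith
      obtain ⟨e1, e2⟩ := hbd (α (t' - 1)) (ha _ (by linarith) (by linarith))
        (by rw [← h4]; exact ha _ h0 h1.le)
      rw [← h4] at e2
      rw [hαn] at e1 e2
      have e1' : |1 - 2 * (t' - 1)| = 1 := by
        apply mul_right_cancel₀ hr0.ne'; rw [e1, one_mul]
      have e2' : |1 - 2 * t| = 1 := by
        apply mul_right_cancel₀ hr0.ne'; rw [e2, one_mul]
      have f1 : t' - 1 = 0 := by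
        rcases (abs_eq (by norm_num)).1 e1' with h | h <;> linarith
      have f2 : t = 0 := by
        rcases (abs_eq (by norm_num)).1 e2' with h | h <;> linarith
      rw [f1, f2] at h4
      exact hfix _ h4.symm
  have hinj : ∀ t t', t < t' → t' ≤ t + 1 → J t ≠ J t' := by
    intro t t' h2 h3 h4
    have e1 := hJn (Int.fract t) ⌊t⌋
    have e2 := hJn (t' - ⌊t⌋) ⌊t⌋
    rw [Int.fract_add_floor] at e1
    rw [sub_add_cancel] at e2
    rw [e1, e2] at h4
    have hft := Int.self_sub_floor t
    exact hinj0 (Int.fract t) (t' - ⌊t⌋) (Int.fract_nonneg t) (Int.fract_lt_one t)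
      (by rw [← hft]; linarith) (by rw [← hft]; linarith) ((h ^ ⌊t⌋).injective h4)
  have hx0 : J (1/2) = x := by
    rw [hJ01 _ (by norm_num) (by norm_num), hα1 _ le_rfl]; norm_num
  have hx1 : J (1/2 + (n:ℤ)) = x := by
    rw [hJn, hx0, zpow_natCast, hx]
  refine bw_core h hd hfix J hJc hJ1 hinj (1/2) (1/2 + (n:ℤ)) ?_ (hx0.trans hx1.symm)
  have : (1:ℝ) ≤ n := by exact_mod_cast hn
  push_cast; linarith

/-- Brouwer: free balls are wandering. -/
theorem bw_free (h : ℂ ≃ₜ ℂ) (hd : BwDeg h 1) (hfix : ∀ z, h z ≠ z) (c : ℂ) (R : ℝ)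
    (hfree : ∀ z ∈ Metric.ball c R, h z ∉ Metric.ball c R) (n : ℕ) (hn : 1 ≤ n) (y : ℂ)
    (hy : y ∈ Metric.ball c R) : (h ^ n) y ∉ Metric.ball c R := by
  induction n using Nat.strong_induction_on generalizing y with
  | _ n ih =>
  intro hy'
  have hint : ∀ i, 1 ≤ i → i < n → (h ^ i) y ∉ Metric.ball c R := fun i h1 h2 => ih i h2 h1 y hy
  rw [Metric.mem_ball, dist_eq_norm] at hy hy'
  obtain ⟨φ₁, hφ₁d, hφ₁c, hφ₁o⟩ := bw_push c (y - c) R hy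
  obtain ⟨φ₂, hφ₂d, hφ₂c, hφ₂o⟩ := bw_push c ((h ^ n) y - c) R hy'
  let φ : ℂ ≃ₜ ℂ := φ₁ * φ₂⁻¹
  have hφd : BwDeg φ 1 := by simpa using bwDeg_mul hφ₁d (bwDeg_inv hφ₂d)
  have hinv : ∀ z, φ₂⁻¹ (φ₂ z) = z := fun z => φ₂.symm_apply_apply z
  have hφy : φ ((h ^ n) y) = y := by
    have : φ₂ c = (h ^ n) y := by rw [hφ₂c]; ring
    simp only [φ, Homeomorph.mul_apply]
    rw [← this, hinv, hφ₁c]; ring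
  have hφo : ∀ z, z ∉ Metric.ball c R → φ z = z := by
    intro z hz
    rw [Metric.mem_ball, dist_eq_norm, not_lt] at hz
    simp only [φ, Homeomorph.mul_apply]
    have h1 : φ₂⁻¹ z = z := by
      conv_lhs => rw [← hφ₂o z hz]
      exact hinv z
    rw [h1, hφ₁o z hz]
  let k : ℂ ≃ₜ ℂ := φ * h
  have hkfix : ∀ z, k z ≠ z := by
    intro z hz
    have hz' : φ (h z) = z := hz
    by_cases hb : h z ∈ Metric.ball c R
    · have hzb : z ∈ Metric.ball c R := by
        by_contra hzb
        have h1 := hφo z hzb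
        exact hzb ((φ.injective (hz'.trans h1.symm)) ▸ hb)
      exact hfree z hzb hb
    · rw [hφo _ hb] at hz'
      exact hfix z hz'
  have hki : ∀ i, i < n → (k ^ i) y = (h ^ i) y := by
    intro i
    induction i with
    | zero => intro _; rfl
    | succ i ihi =>
      intro hi
      rw [pow_succ', pow_succ', Homeomorph.mul_apply, ihi (by omega)]
      have h1 := hint (i + 1) (by omega) hi
      rw [pow_succ'] at h1
      exact hφo _ h1
  refine bw_periodic k (by simpa using bwDeg_mul hφd hd) hkfix y n hn ?_
  obtain ⟨m, rfl⟩ : ∃ m, n = m + 1 := ⟨n - 1, by omega⟩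
  rw [pow_succ', Homeomorph.mul_apply, hki m (by omega)]
  rw [pow_succ', Homeomorph.mul_apply] at hφy
  exact hφy


theorem bw_edge {Φ : ℝ × ℝ → ℂ} {g : ℝ × ℝ → ℂ} {S : Set (ℝ × ℝ)} (hS : Convex ℝ S)
    (hΦ : ContinuousOn Φ S) (hg : ContinuousOn g S) (he : ∀ p ∈ S, Complex.exp (Φ p) = g p)
    (hsl : ∀ p ∈ S, g p ∈ Complex.slitPlane) {p q : ℝ × ℝ} (hp : p ∈ S) (hq : q ∈ S) :
    Φ p - Complex.log (g p) = Φ q - Complex.log (g q) :=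
  bw_exp_const' hS.isPreconnected hΦ (hg.clog hsl)
    (fun p hp => by rw [he p hp, Complex.exp_log (Complex.slitPlane_ne_zero (hsl p hp))]) hp hq

theorem bw_cross (γ σ : ℝ → ℝ × ℝ) (hγ : Continuous γ) (hσ : Continuous σ)
    (h1 : ∀ t ∈ Set.Icc (0:ℝ) 1, (σ 0).2 < (γ t).2 ∧ (γ t).2 < (σ 1).2)
    (h2 : ∀ u ∈ Set.Icc (0:ℝ) 1, (γ 0).1 < (σ u).1 ∧ (σ u).1 < (γ 1).1) :
    ∃ t ∈ Set.Icc (0:ℝ) 1, ∃ u ∈ Set.Icc (0:ℝ) 1, γ t = σ u := by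
  by_contra hcon
  push Not at hcon
  let g : ℝ × ℝ → ℂ := fun p => ⟨(γ p.1).1 - (σ p.2).1, (γ p.1).2 - (σ p.2).2⟩
  have hg : Continuous g := by
    have : g = fun p => ((((γ p.1).1 - (σ p.2).1 : ℝ)) : ℂ) + (((γ p.1).2 - (σ p.2).2 : ℝ) : ℂ) * Complex.I := by
      funext p
      exact Complex.mk_eq_add_mul_I _ _
    rw [this]; fun_prop
  let I := Set.Icc (0:ℝ) 1
  have hI : Convex ℝ I := convex_Icc 0 1
  have h0I : (0:ℝ) ∈ I := ⟨le_rfl, zero_le_one⟩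
  have h1I : (1:ℝ) ∈ I := ⟨zero_le_one, le_rfl⟩
  obtain ⟨Φ, hΦ, he⟩ := bw_lift (hI.prod hI) hg.continuousOn (by
    rintro ⟨t, u⟩ ⟨ht, hu⟩ h0
    have a1 := congrArg Complex.re h0
    have a2 := congrArg Complex.im h0
    simp only [g, Complex.zero_re, Complex.zero_im, sub_eq_zero] at a1 a2
    exact hcon t ht u hu (Prod.ext a1 a2))
  have hc0 : Convex ℝ ({0} : Set ℝ) := convex_singleton 0
  have hc1 : Convex ℝ ({1} : Set ℝ) := convex_singleton 1
  have s0 : ({0} : Set ℝ) ⊆ I := by simpa using h0I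
  have s1 : ({1} : Set ℝ) ⊆ I := by simpa using h1I
  have b1 := Set.prod_mono (subset_refl I) s0
  have b2 := Set.prod_mono s1 (subset_refl I)
  have b3 := Set.prod_mono (subset_refl I) s1
  have b4 := Set.prod_mono s0 (subset_refl I)
  have e1 := bw_edge (p := (0, 0)) (q := (1, 0)) (hI.prod hc0) (hΦ.mono b1) hg.continuousOn
    (fun p hp => he p (b1 hp)) (by
      rintro ⟨t, u⟩ ⟨ht, hu⟩
      simp only [Set.mem_singleton_iff] at hu
      subst hu
      right
      exact (sub_pos.2 (h1 t ht).1).ne') ⟨h0I, rfl⟩ ⟨h1I, rfl⟩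
  have e2 := bw_edge (p := (1, 0)) (q := (1, 1)) (hc1.prod hI) (hΦ.mono b2) hg.continuousOn
    (fun p hp => he p (b2 hp)) (by
      rintro ⟨t, u⟩ ⟨ht, hu⟩
      simp only [Set.mem_singleton_iff] at ht
      subst ht
      left
      exact sub_pos.2 (h2 u hu).2) ⟨rfl, h0I⟩ ⟨rfl, h1I⟩
  have e3 := bw_edge (p := (0, 1)) (q := (1, 1)) (hI.prod hc1) (hΦ.mono b3) hg.continuousOn
    (fun p hp => he p (b3 hp)) (by
      rintro ⟨t, u⟩ ⟨ht, hu⟩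
      simp only [Set.mem_singleton_iff] at hu
      subst hu
      right
      exact (sub_neg.2 (h1 t ht).2).ne) ⟨h0I, rfl⟩ ⟨h1I, rfl⟩
  have e4 := bw_edge (Φ := fun p => Φ p + Real.pi * Complex.I) (g := fun p => - g p)
    (p := (0, 0)) (q := (0, 1)) (hc0.prod hI) ((hΦ.mono b4).add continuousOn_const)
    hg.neg.continuousOn
    (fun p hp => by rw [Complex.exp_add, he p (b4 hp), Complex.exp_pi_mul_I]; ring) (by
      rintro ⟨t, u⟩ ⟨ht, hu⟩
      simp only [Set.mem_singleton_iff] at ht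
      subst ht
      left
      simp only [g, Complex.neg_re]
      have := (h2 u hu).1
      linarith) ⟨rfl, h0I⟩ ⟨rfl, h1I⟩
  have l1 : Complex.log (- g (0, 0)) = Complex.log (g (0, 0)) - Real.pi * Complex.I := by
    have : 0 < (g (0, 0)).im := sub_pos.2 (h1 0 h0I).1
    rw [Complex.log, Complex.log, Complex.arg_neg_eq_arg_sub_pi_of_im_pos this, norm_neg]
    push_cast; ring
  have l2 : Complex.log (- g (0, 1)) = Complex.log (g (0, 1)) + Real.pi * Complex.I := by
    have : (g (0, 1)).im < 0 := sub_neg.2 (h1 0 h0I).2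
    rw [Complex.log, Complex.log, Complex.arg_neg_eq_arg_add_pi_of_im_neg this, norm_neg]
    push_cast; ring
  simp only [l1, l2] at e4
  have : 2 * Real.pi * Complex.I = 0 := by linear_combination e4 + e3 - e2 - e1
  exact Complex.two_pi_I_ne_zero this


theorem projA_cont : Continuous projA :=
  ((AddCircle.continuous_mk' (1:ℝ)).comp continuous_fst).prodMk continuous_snd

theorem projA_open : IsOpenMap projA := by
  have h : IsOpenMap (fun x : ℝ => (x : AddCircle (1:ℝ))) := QuotientAddGroup.isOpenMap_coe
  exact h.prodMap IsOpenMap.id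

theorem projA_surj (x : Ann) : ∃ z, projA z = x := by
  obtain ⟨a, b⟩ := x
  obtain ⟨a, rfl⟩ := QuotientAddGroup.mk_surjective a
  exact ⟨(a, b), rfl⟩

theorem projA_eq {z w : ℝ × ℝ} (h : projA z = projA w) : ∃ l : ℤ, z = w + ((l:ℝ), 0) := by
  obtain ⟨z1, z2⟩ := z
  obtain ⟨w1, w2⟩ := w
  simp only [projA, Prod.mk.injEq] at h
  have h1 : ((z1 - w1 : ℝ) : AddCircle (1:ℝ)) = 0 := by
    rw [AddCircle.coe_sub, h.1, sub_self]
  obtain ⟨n, hn⟩ := (AddCircle.coe_eq_zero_iff (1:ℝ)).1 h1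
  refine ⟨n, ?_⟩
  simp only [zsmul_eq_mul, mul_one] at hn
  ext
  · simp [hn]
  · simp [h.2]

theorem projA_add (z : ℝ × ℝ) (l : ℤ) : projA (z + ((l:ℝ), 0)) = projA z := by
  simp [projA]

theorem sep_translate {S : Set (ℝ × ℝ)} (hS : ∀ z (l : ℤ), z ∈ S → z + ((l:ℝ), 0) ∈ S)
    {a b : ℝ × ℝ} (h : JoinedIn S a b) (l : ℤ) : JoinedIn S (a + ((l:ℝ), 0)) (b + ((l:ℝ), 0)) := by
  have h2 := h.map_continuousOn (f := fun z => z + ((l:ℝ), 0)) (by fun_prop)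
  exact h2.mono (by rintro _ ⟨z, hz, rfl⟩; exact hS z l hz)

theorem sep_iter {S : Set (ℝ × ℝ)} (hS : ∀ z (l : ℤ), z ∈ S → z + ((l:ℝ), 0) ∈ S)
    {a : ℝ × ℝ} {k : ℕ} (h : JoinedIn S a (a + ((k:ℝ), 0))) (N : ℕ) :
    JoinedIn S a (a + (((N * k : ℕ) : ℝ), 0)) := by
  induction N with
  | zero =>
    have : a + (((0 * k : ℕ) : ℝ), (0:ℝ)) = a := by ext <;> simp
    rw [this]
    exact JoinedIn.refl h.source_mem
  | succ N ih =>
    have h2 := sep_translate hS h ((N * k : ℕ) : ℤ)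
    refine ih.trans ?_
    convert h2 using 1
    · ext <;> simp
    · ext
      · simp; ring
      · simp

/-- lifting of a path in the annulus -/
theorem sep_lift (P : C(unitInterval, Ann)) : ∃ Q : C(unitInterval, ℝ × ℝ), ∀ t, projA (Q t) = P t := by
  obtain ⟨z, hz⟩ := projA_surj (P 0)
  have hcov := AddCircle.isCoveringMap_coe (1:ℝ)
  let g : C(unitInterval, AddCircle (1:ℝ)) := ⟨fun t => (P t).1, by fun_prop⟩
  have h0 : g 0 = ((z.1 : ℝ) : AddCircle (1:ℝ)) := by
    change (P 0).1 = _
    rw [← hz]; rfl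
  refine ⟨⟨fun t => (hcov.liftPath g z.1 h0 t, (P t).2), by fun_prop⟩, fun t => ?_⟩
  have := congrFun (hcov.liftPath_lifts g z.1 h0) t
  exact Prod.ext this rfl

instance sep_lpc : LocallyPathConnectedSpace Ann :=
  (projA_open.isQuotientMap projA_cont projA_surj).locallyPathConnectedSpace

theorem sep_main {Γ : Set Ann} (hΓ : IsCompact Γ) {a : ℝ × ℝ} {k : ℕ} (hk : 1 ≤ k)
    (h : JoinedIn (projA ⁻¹' Γ) a (a + ((k:ℝ), 0))) (x : Ann) (hx : x ∈ Γᶜ) :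
    ¬ (UnbAbove (connectedComponentIn Γᶜ x) ∧ UnbBelow (connectedComponentIn Γᶜ x)) := by
  rintro ⟨hA, hB⟩
  have hS : ∀ z (l : ℤ), z ∈ projA ⁻¹' Γ → z + ((l:ℝ), 0) ∈ projA ⁻¹' Γ := by
    intro z l hz
    simpa [projA_add] using hz
  obtain ⟨M, hM⟩ : ∃ M : ℝ, ∀ z ∈ Γ, |z.2| < M := by
    obtain ⟨M, hM⟩ := (hΓ.image (f := fun z : Ann => |z.2|) (by fun_prop)).bddAbove
    exact ⟨M + 1, fun z hz => lt_of_le_of_lt (hM ⟨z, hz, rfl⟩) (by linarith)⟩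
  have hop : IsOpen (connectedComponentIn Γᶜ x) := hΓ.isClosed.isOpen_compl.connectedComponentIn
  have hpc := hop.isConnected_iff_isPathConnected.1 (isConnected_connectedComponentIn_iff.2 hx)
  obtain ⟨_, ⟨u, hu, rfl⟩, hu2⟩ := not_bddAbove_iff.1 hA M
  obtain ⟨_, ⟨v, hv, rfl⟩, hv2⟩ := not_bddBelow_iff.1 hB (-M)
  obtain ⟨P, hP⟩ := hpc.joinedIn v hv u hu
  obtain ⟨Q, hQ⟩ := sep_lift P.toContinuousMap
  -- bound on Q
  obtain ⟨R, hR⟩ : ∃ R : ℝ, ∀ t, |(Q t).1| < R := by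
    obtain ⟨M, hM⟩ := (isCompact_range (f := fun t => |(Q t).1|) (by fun_prop)).bddAbove
    exact ⟨M + 1, fun t => lt_of_le_of_lt (hM ⟨t, rfl⟩) (by linarith)⟩
  obtain ⟨N, hN⟩ := exists_nat_gt (R + |a.1|)
  have hj1 := sep_iter hS h N
  have hNk : (N:ℝ) ≤ ((N * k : ℕ) : ℝ) := by
    exact_mod_cast Nat.le_mul_of_pos_right N hk
  have hj2 := sep_translate hS hj1 (-((N * k : ℕ) : ℤ))
  have hj : JoinedIn (projA ⁻¹' Γ) (a + (((-((N * k : ℕ) : ℤ) : ℤ) : ℝ), 0)) (a + (((N * k : ℕ) : ℝ), 0)) := by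
    refine JoinedIn.trans ?_ hj1
    convert hj2 using 1
    ext <;> simp
  obtain ⟨γ, hγ⟩ := hj
  let σ : ℝ → ℝ × ℝ := fun t => Q (Set.projIcc 0 1 zero_le_one t)
  have hs0 : (σ 0).2 = v.2 := by
    have := hQ 0
    simp only [σ, Set.projIcc_left]
    change (projA (Q 0)).2 = _
    rw [this]; simp
  have hs1 : (σ 1).2 = u.2 := by
    have := hQ 1
    simp only [σ, Set.projIcc_right]
    change (projA (Q 1)).2 = _
    rw [this]; simp
  have hγM : ∀ t, |(γ t).2| < M := fun t => hM _ (hγ t)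
  have a1 := abs_lt.1 (lt_of_le_of_lt (le_refl |a.1|) (lt_add_one _))
  obtain ⟨t, ht, s, hs, e⟩ := bw_cross γ.extend σ γ.continuous_extend
    (Q.continuous.comp continuous_projIcc) (by
      intro t ht
      rw [hs0, hs1, γ.extend_apply ht]
      have := abs_lt.1 (hγM ⟨t, ht⟩)
      constructor <;> linarith [this.1, this.2]) (by
      intro t ht
      have := abs_lt.1 (hR (Set.projIcc 0 1 zero_le_one t))
      simp only [Path.extend_zero, Path.extend_one, σ]
      have := neg_abs_le a.1
      have := le_abs_self a.1
      constructor
      · simp only [Prod.fst_add, Int.cast_neg, Int.cast_natCast]; linarith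
      · simp only [Prod.fst_add]; linarith)
  rw [γ.extend_apply ht] at e
  have h1 : projA (γ ⟨t, ht⟩) ∈ Γ := hγ _
  rw [e] at h1
  simp only [σ] at h1
  rw [hQ] at h1
  exact connectedComponentIn_subset _ _ (hP _) h1


theorem circ_comp_eq {F B : Set Ann} {x z : Ann} (hz : z ∈ connectedComponentIn F x)
    (hB : IsPreconnected B) (hBF : B ⊆ F) (hzB : z ∈ B) : B ⊆ connectedComponentIn F x := by
  rw [connectedComponentIn_eq hz]
  exact hB.subset_connectedComponentIn hzB hBF

theorem circ_closure {Γ : Set Ann} (hΓ : IsClosed Γ) {x p : Ann}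
    (hp : p ∈ closure (connectedComponentIn Γᶜ x)) (hpΓ : p ∉ Γ) :
    p ∈ connectedComponentIn Γᶜ x := by
  have hop : IsOpen (connectedComponentIn Γᶜ p) := hΓ.isOpen_compl.connectedComponentIn
  obtain ⟨q, hq, hq2⟩ := mem_closure_iff.1 hp _ hop (mem_connectedComponentIn hpΓ)
  rw [connectedComponentIn_eq hq2, ← connectedComponentIn_eq hq]
  exact mem_connectedComponentIn hpΓ

theorem circ_meets {Γ : Set Ann} (hΓ : IsClosed Γ) (hne : Γ.Nonempty) {x : Ann} (hx : x ∈ Γᶜ) :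
    ∃ p, p ∈ closure (connectedComponentIn Γᶜ x) ∧ p ∈ Γ := by
  have hfr : (frontier (connectedComponentIn Γᶜ x)).Nonempty := by
    rw [nonempty_frontier_iff]
    refine ⟨⟨x, mem_connectedComponentIn hx⟩, fun h => ?_⟩
    obtain ⟨y, hy⟩ := hne
    have : y ∈ connectedComponentIn Γᶜ x := by rw [h]; trivial
    exact connectedComponentIn_subset _ _ this hy
  obtain ⟨p, hp⟩ := hfr
  refine ⟨p, hp.1, ?_⟩
  by_contra hpΓ
  have h1 := circ_closure hΓ hp.1 hpΓ
  have hop : IsOpen (connectedComponentIn Γᶜ x) := hΓ.isOpen_compl.connectedComponentIn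
  exact hp.2 (hop.interior_eq.symm ▸ h1)

theorem circ_up (M : ℝ) : IsPreconnected {z : Ann | M < z.2} := by
  have h : IsPreconnected {z : ℝ × ℝ | M < z.2} :=
    (convex_halfSpace_gt (f := fun z : ℝ × ℝ => z.2) ⟨fun _ _ => rfl, fun _ _ => rfl⟩ M).isPreconnected
  have h2 := h.image projA projA_cont.continuousOn
  convert h2 using 1
  ext x
  constructor
  · intro hx
    obtain ⟨z, rfl⟩ := projA_surj x
    exact ⟨z, hx, rfl⟩
  · rintro ⟨z, hz, rfl⟩
    exact hz

theorem circ_dn (M : ℝ) : IsPreconnected {z : Ann | z.2 < M} := by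
  have h : IsPreconnected {z : ℝ × ℝ | z.2 < M} :=
    (convex_halfSpace_lt (f := fun z : ℝ × ℝ => z.2) ⟨fun _ _ => rfl, fun _ _ => rfl⟩ M).isPreconnected
  have h2 := h.image projA projA_cont.continuousOn
  convert h2 using 1
  ext x
  constructor
  · intro hx
    obtain ⟨z, rfl⟩ := projA_surj x
    exact ⟨z, hx, rfl⟩
  · rintro ⟨z, hz, rfl⟩
    exact hz

theorem circ_main {C Γ : Set Ann} (hC : IsCircloidA C) (hΓ : IsCompact Γ) (hΓc : IsConnected Γ)
    (hΓC : Γ ⊆ interior C) {a : ℝ × ℝ} {k : ℕ} (hk : 1 ≤ k)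
    (h : JoinedIn (projA ⁻¹' Γ) a (a + ((k:ℝ), 0))) : False := by
  have hsep := sep_main hΓ hk h
  have hcl := hΓ.isClosed
  obtain ⟨M, hM⟩ : ∃ M : ℝ, ∀ z ∈ Γ, |z.2| < M := by
    obtain ⟨M, hM⟩ := (hΓ.image (f := fun z : Ann => |z.2|) (by fun_prop)).bddAbove
    exact ⟨M + 1, fun z hz => lt_of_le_of_lt (hM ⟨z, hz, rfl⟩) (by linarith)⟩
  have hup : {z : Ann | M < z.2} ⊆ Γᶜ := fun z hz hzΓ => by
    have := (abs_lt.1 (hM z hzΓ)).2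
    have : M < z.2 := hz
    linarith
  have hdn : {z : Ann | z.2 < -M} ⊆ Γᶜ := fun z hz hzΓ => by
    have := (abs_lt.1 (hM z hzΓ)).1
    have : z.2 < -M := hz
    linarith
  set c : Ann := (0, M + 1) with hc
  set c' : Ann := (0, -M - 1) with hc'
  have cup : c ∈ {z : Ann | M < z.2} := by change M < M + 1; linarith
  have cdn : c' ∈ {z : Ann | z.2 < -M} := by change -M - 1 < -M; linarith
  set U := connectedComponentIn Γᶜ c with hU
  set U' := connectedComponentIn Γᶜ c' with hU'
  have upU : {z : Ann | M < z.2} ⊆ U := (circ_up M).subset_connectedComponentIn cup hup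
  have dnU : {z : Ann | z.2 < -M} ⊆ U' := (circ_dn (-M)).subset_connectedComponentIn cdn hdn
  have hUA : UnbAbove U := by
    refine not_bddAbove_iff.2 fun x => ⟨max x M + 1, ⟨(0, max x M + 1), upU ?_, rfl⟩, ?_⟩
    · change M < max x M + 1
      linarith [le_max_right x M]
    · linarith [le_max_left x M]
  have hUB : UnbBelow U' := by
    refine not_bddBelow_iff.2 fun x => ⟨min x (-M) - 1, ⟨(0, min x (-M) - 1), dnU ?_, rfl⟩, ?_⟩
    · change min x (-M) - 1 < -M
      linarith [min_le_right x (-M)]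
    · linarith [min_le_left x (-M)]
  have hne : U ≠ U' := fun e => hsep c (hup cup) ⟨hUA, by rw [← hU, e]; exact hUB⟩
  have hUo : IsOpen U := hcl.isOpen_compl.connectedComponentIn
  have hUo' : IsOpen U' := hcl.isOpen_compl.connectedComponentIn
  set E : Set Ann := (U ∪ U')ᶜ with hE
  have hEc : Eᶜ = U ∪ U' := compl_compl _
  have hUΓ : U ⊆ Γᶜ := connectedComponentIn_subset _ _
  have hUΓ' : U' ⊆ Γᶜ := connectedComponentIn_subset _ _
  have hΓE : Γ ⊆ E := by
    rintro z hz (h1 | h1)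
    · exact hUΓ h1 hz
    · exact hUΓ' h1 hz
  have hEΓ : Eᶜ ⊆ Γᶜ := Set.compl_subset_compl.2 hΓE
  have hEC : E ⊆ C := by
    intro z hz
    by_contra hzC
    have hb := hC.1.2.2.1 z hzC
    have hK : connectedComponentIn Cᶜ z ⊆ Γᶜ := (connectedComponentIn_subset _ _).trans
      (Set.compl_subset_compl.2 (hΓC.trans interior_subset))
    have hzK := mem_connectedComponentIn (F := Cᶜ) hzC
    rw [BoundedA, not_and_or] at hb
    rcases hb with hb | hb
    · obtain ⟨_, ⟨u, hu, rfl⟩, hu2⟩ := not_bddAbove_iff.1 hb M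
      exact hz (Or.inl (circ_comp_eq (upU hu2) isPreconnected_connectedComponentIn hK hu hzK))
    · obtain ⟨_, ⟨u, hu, rfl⟩, hu2⟩ := not_bddBelow_iff.1 hb (-M)
      exact hz (Or.inr (circ_comp_eq (dnU hu2) isPreconnected_connectedComponentIn hK hu hzK))
  have hEcl : IsClosed E := (hUo.union hUo').isClosed_compl
  have hEcomp : IsCompact E := hC.1.1.of_isClosed_subset hEcl hEC
  obtain ⟨g, hg⟩ := hΓc.nonempty
  have hEconn : IsConnected E := by
    refine ⟨⟨g, hΓE hg⟩, isPreconnected_of_forall g fun z hz => ?_⟩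
    by_cases hzΓ : z ∈ Γ
    · exact ⟨Γ, hΓE, hg, hzΓ, hΓc.isPreconnected⟩
    · obtain ⟨p, hp, hpΓ⟩ := circ_meets hcl ⟨g, hg⟩ hzΓ
      have hBz := mem_connectedComponentIn (F := Γᶜ) hzΓ
      refine ⟨closure (connectedComponentIn Γᶜ z) ∪ Γ, ?_, Or.inr hg, Or.inl (subset_closure hBz),
        IsPreconnected.union p hp hpΓ isPreconnected_connectedComponentIn.closure hΓc.isPreconnected⟩
      rintro q (hq | hq)
      · by_cases hqΓ : q ∈ Γ
        · exact hΓE hqΓ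
        · have hq2 := circ_closure hcl hq hqΓ
          rintro (h1 | h1)
          · apply hz; left
            rw [hU, connectedComponentIn_eq h1, ← connectedComponentIn_eq hq2]
            exact hBz
          · apply hz; right
            rw [hU', connectedComponentIn_eq h1, ← connectedComponentIn_eq hq2]
            exact hBz
      · exact hΓE hq
  have compU : ∀ z ∈ U, connectedComponentIn Eᶜ z = U := by
    intro z hz
    apply Set.Subset.antisymm
    · rw [hU, connectedComponentIn_eq hz]
      exact connectedComponentIn_mono _ hEΓ
    · exact isPreconnected_connectedComponentIn.subset_connectedComponentIn hz
        (by rw [hEc]; exact Set.subset_union_left)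
  have compU' : ∀ z ∈ U', connectedComponentIn Eᶜ z = U' := by
    intro z hz
    apply Set.Subset.antisymm
    · rw [hU', connectedComponentIn_eq hz]
      exact connectedComponentIn_mono _ hEΓ
    · exact isPreconnected_connectedComponentIn.subset_connectedComponentIn hz
        (by rw [hEc]; exact Set.subset_union_right)
  have hcU : c ∈ U := upU cup
  have hcU' : c' ∈ U' := dnU cdn
  have hann : IsAnnularContinuum E := by
    refine ⟨hEcomp, hEconn, ?_, c, c', ?_, ?_, ?_, ?_⟩
    · intro x hx
      rw [hEc] at hx
      rcases hx with hx | hx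
      · rw [compU x hx]; exact fun hb => hUA hb.1
      · rw [compU' x hx]; exact fun hb => hUB hb.2
    · rw [hEc]; exact Or.inl hcU
    · rw [hEc]; exact Or.inr hcU'
    · rw [compU c hcU, compU' c' hcU']; exact hne
    · intro z hz
      rw [hEc] at hz
      rcases hz with hz | hz
      · left; rw [compU z hz, compU c hcU]
      · right; rw [compU' z hz, compU' c' hcU']
  have hEeq := hC.2 E hEC hann
  obtain ⟨p, hp, hpΓ⟩ := circ_meets hcl ⟨g, hg⟩ (hup cup)
  obtain ⟨q, hq, hqU⟩ := mem_closure_iff.1 hp _ isOpen_interior (hΓC hpΓ)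
  have hqC := interior_subset hq
  rw [← hEeq] at hqC
  exact hqC (Or.inl hqU)

theorem circ_claim {C : Set Ann} (hC : IsCircloidA C) {x : ℝ × ℝ}
    (hx : x ∈ projA ⁻¹' interior C) {k : ℕ} (hk : 1 ≤ k) :
    x + ((k:ℝ), 0) ∉ connectedComponentIn (projA ⁻¹' interior C) x := by
  intro hmem
  have hWo : IsOpen (projA ⁻¹' interior C) := isOpen_interior.preimage projA_cont
  have hpc := hWo.connectedComponentIn.isConnected_iff_isPathConnected.1
    (isConnected_connectedComponentIn_iff.2 hx)
  obtain ⟨P, hP⟩ := hpc.joinedIn x (mem_connectedComponentIn hx) _ hmem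
  have hcont : Continuous fun t => projA (P t) := projA_cont.comp P.continuous
  refine circ_main hC (Γ := Set.range fun t => projA (P t)) (isCompact_range hcont)
    (isConnected_range hcont) ?_ (a := x) hk ⟨P, fun t => ⟨t, rfl⟩⟩
  rintro _ ⟨t, rfl⟩
  exact connectedComponentIn_subset (projA ⁻¹' interior C) _ (hP t)


def bwStab (S : Set (ℝ × ℝ)) : Subgroup ((ℝ × ℝ) ≃ₜ (ℝ × ℝ)) where
  carrier := {g | ∀ z, g z ∈ S ↔ z ∈ S}
  mul_mem' := by
    intro a b ha hb z
    exact (ha (b z)).trans (hb z)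
  one_mem' := fun z => Iff.rfl
  inv_mem' := by
    intro a ha z
    have := ha (a.symm z)
    rw [a.apply_symm_apply] at this
    exact this.symm

theorem bwStab_iff {S : Set (ℝ × ℝ)} {g : (ℝ × ℝ) ≃ₜ (ℝ × ℝ)} :
    g ∈ bwStab S ↔ ∀ z, g z ∈ S ↔ z ∈ S := Iff.rfl

theorem bwStab_comp {W : Set (ℝ × ℝ)} {x z : ℝ × ℝ} {g : (ℝ × ℝ) ≃ₜ (ℝ × ℝ)}
    (hg : g ∈ bwStab W) (hz : z ∈ connectedComponentIn W x)
    (hgz : g z ∈ connectedComponentIn W x) : g ∈ bwStab (connectedComponentIn W x) := by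
  have hzW := connectedComponentIn_subset _ _ hz
  have himg : g '' W = W := by
    ext w
    constructor
    · rintro ⟨v, hv, rfl⟩
      exact (hg v).2 hv
    · intro hw
      refine ⟨g.symm w, ?_, g.apply_symm_apply w⟩
      rw [← hg, g.apply_symm_apply]
      exact hw
  have h := g.image_connectedComponentIn hzW
  rw [himg, ← connectedComponentIn_eq hgz, ← connectedComponentIn_eq hz] at h
  intro w
  conv_lhs => rw [← h]
  exact g.injective.mem_set_image

def bwT : (ℝ × ℝ) ≃ₜ (ℝ × ℝ) := Homeomorph.addRight (1, 0)

theorem bwT_nat (l : ℕ) (z : ℝ × ℝ) : (bwT ^ l) z = z + ((l:ℝ), 0) := by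
  induction l with
  | zero => ext <;> simp
  | succ l ih =>
    rw [pow_succ']
    change bwT ((bwT ^ l) z) = _
    rw [ih]
    change z + ((l:ℝ), 0) + (1, 0) = _
    ext
    · simp; ring
    · simp

theorem bwT_zpow (l : ℤ) (z : ℝ × ℝ) : (bwT ^ l) z = z + ((l:ℝ), 0) := by
  obtain ⟨n, rfl | rfl⟩ := l.eq_nat_or_neg
  · rw [zpow_natCast, bwT_nat]; simp
  · rw [zpow_neg, zpow_natCast]
    change (bwT ^ n).symm z = _
    rw [Homeomorph.symm_apply_eq, bwT_nat]
    ext <;> simp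

theorem bw_pow_comp {X : Type*} [TopologicalSpace X] (g : X ≃ₜ X) (n : ℕ) (z : X) :
    (g ^ (n + 1)) z = g ((g ^ n) z) := by
  rw [pow_succ']; rfl

theorem lift_pow {f : Ann ≃ₜ Ann} {G : (ℝ × ℝ) ≃ₜ (ℝ × ℝ)} (hG : IsLiftA f G) (m : ℕ) (z : ℝ × ℝ) :
    projA ((G ^ m) z) = f^[m] (projA z) := by
  induction m with
  | zero => rfl
  | succ m ih => rw [bw_pow_comp, hG.1, ih, Function.iterate_succ_apply']

theorem lift_rec {f : Ann ≃ₜ Ann} {G : (ℝ × ℝ) ≃ₜ (ℝ × ℝ)} (hG : IsLiftA f G)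
    (hnw : NonWandering (⇑f)) {V : Set (ℝ × ℝ)} (hV : IsOpen V) (hne : V.Nonempty) :
    ∃ m : ℕ, 1 ≤ m ∧ ∃ l : ℤ, ∃ z ∈ V, (bwT ^ l * G ^ m) z ∈ V := by
  obtain ⟨m, hm, y, ⟨_, ⟨v, hv, rfl⟩, hy⟩, ⟨w, hw, hwy⟩⟩ :=
    hnw (projA '' V) (projA_open V hV) (hne.image _)
  rw [← lift_pow hG, ← hwy] at hy
  obtain ⟨l, hl⟩ := projA_eq hy
  refine ⟨m, hm, -l, v, hv, ?_⟩
  change (bwT ^ (-l)) ((G ^ m) v) ∈ V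
  rw [bwT_zpow, hl]
  convert hw using 1
  ext <;> simp

theorem final_free {D : Set (ℝ × ℝ)} (hD : IsOpen D) {x : ℝ × ℝ} (hx : x ∈ D)
    (H : (ℝ × ℝ) ≃ₜ (ℝ × ℝ)) (hfix : ∀ z, (H * H) z ≠ z)
    (hrec : ∀ V ⊆ D, IsOpen V → V.Nonempty → ∃ j : ℕ, 1 ≤ j ∧ ∃ z ∈ V, ((H * H) ^ j) z ∈ V) :
    False := by
  let e : (ℝ × ℝ) ≃ₜ ℂ := Complex.equivRealProdCLM.symm.toHomeomorph
  let h0 : ℂ ≃ₜ ℂ := e.symm.trans (H.trans e)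
  have hconj : ∀ z, (h0 * h0) (e z) = e ((H * H) z) := by
    intro z
    change e (H (e.symm (e (H (e.symm (e z)))))) = e (H (H z))
    simp
  have hpow : ∀ j z, ((h0 * h0) ^ j) (e z) = e (((H * H) ^ j) z) := by
    intro j
    induction j with
    | zero => intro z; rfl
    | succ j ih => intro z; rw [bw_pow_comp, ih, hconj, bw_pow_comp]
  have hfix' : ∀ z, (h0 * h0) z ≠ z := by
    intro z hz
    obtain ⟨z, rfl⟩ := e.surjective z
    rw [hconj] at hz
    exact hfix z (e.injective hz)
  obtain ⟨u, v, hu, hv, hcu, hcv, hdis⟩ := t2_separation (hfix' (e x)).symm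
  have hO : IsOpen (u ∩ (h0 * h0) ⁻¹' v ∩ e.symm ⁻¹' D) :=
    (hu.inter (hv.preimage (h0 * h0).continuous)).inter (hD.preimage e.symm.continuous)
  obtain ⟨R, hR, hball⟩ := Metric.isOpen_iff.1 hO (e x) ⟨⟨hcu, hcv⟩, by simpa using hx⟩
  obtain ⟨j, hj, z, hz, hz2⟩ := hrec (e ⁻¹' Metric.ball (e x) R)
    (fun z hz => by simpa using (hball hz).2) (Metric.isOpen_ball.preimage e.continuous)
    ⟨x, Metric.mem_ball_self hR⟩
  refine bw_free (h0 * h0) (bwDeg_sq h0) hfix' (e x) R ?_ j hj (e z) hz ?_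
  · intro z hz hz2
    exact Set.disjoint_left.1 hdis (hball hz2).1.1 (hball hz).1.2
  · rw [hpow]; exact hz2

theorem final_parity {D : Set (ℝ × ℝ)} (H : (ℝ × ℝ) ≃ₜ (ℝ × ℝ))
    (hrec : ∀ V ⊆ D, IsOpen V → V.Nonempty → ∃ j : ℕ, 1 ≤ j ∧ ∃ z ∈ V, (H ^ j) z ∈ V) :
    ∀ V ⊆ D, IsOpen V → V.Nonempty → ∃ j : ℕ, 1 ≤ j ∧ ∃ z ∈ V, ((H * H) ^ j) z ∈ V := by
  intro V hVD hV hne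
  have key : ∀ q : ℕ, 1 ≤ q → Even q → (∃ z ∈ V, (H ^ q) z ∈ V) →
      ∃ j : ℕ, 1 ≤ j ∧ ∃ z ∈ V, ((H * H) ^ j) z ∈ V := by
    rintro q hq ⟨j, rfl⟩ h
    refine ⟨j, by omega, ?_⟩
    rwa [← pow_two, ← pow_mul, two_mul]
  obtain ⟨q1, hq1, z1, hz1, hz1'⟩ := hrec V hVD hV hne
  obtain ⟨q2, hq2, z2, hz2, hz2'⟩ := hrec (V ∩ (H ^ q1) ⁻¹' V)
    (Set.inter_subset_left.trans hVD) (hV.inter (hV.preimage (H ^ q1).continuous)) ⟨z1, hz1, hz1'⟩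
  by_cases h1 : Even q1
  · exact key q1 hq1 h1 ⟨z1, hz1, hz1'⟩
  by_cases h2 : Even q2
  · exact key q2 hq2 h2 ⟨z2, hz2.1, hz2'.1⟩
  refine key (q1 + q2) (by omega) ?_ ⟨z2, hz2.1, ?_⟩
  · rw [Nat.even_add]; tauto
  · rw [pow_add]; exact hz2'.2

theorem final_main (f : Ann ≃ₜ Ann) (G : (ℝ × ℝ) ≃ₜ (ℝ × ℝ)) (hG : IsLiftA f G)
    (hnw : NonWandering (⇑f)) (hnp : ¬ HasPeriodicPoint (⇑f))
    (C : Set Ann) (hC : IsCircloidA C) (hCinv : f '' C = C) :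
    interior C = ∅ := by
  by_contra hne
  obtain ⟨y, hy⟩ := Set.nonempty_iff_ne_empty.2 hne
  obtain ⟨x, rfl⟩ := projA_surj y
  set W := projA ⁻¹' interior C with hW
  have hWo : IsOpen W := isOpen_interior.preimage projA_cont
  have hxW : x ∈ W := hy
  set D := connectedComponentIn W x with hD
  have hDo : IsOpen D := hWo.connectedComponentIn
  have hxD : x ∈ D := mem_connectedComponentIn hxW
  have hcomm : Commute bwT G := by
    ext1 z
    exact (hG.2 z).symm
  have hTW : bwT ∈ bwStab W := by
    intro z
    have h1 : projA (bwT z) = projA z := by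
      have := projA_add z 1
      rw [← this]
      congr 1
      change z + (1, 0) = _
      simp
    change projA (bwT z) ∈ interior C ↔ projA z ∈ interior C
    rw [h1]
  have hint : f '' interior C = interior C := by
    rw [f.image_interior, hCinv]
  have hGW : G ∈ bwStab W := by
    intro z
    change projA (G z) ∈ interior C ↔ projA z ∈ interior C
    rw [hG.1]
    conv_lhs => rw [← hint]
    exact f.injective.mem_set_image
  have F1 : ∀ (l : ℤ) (m : ℕ) z, z ∈ D → (bwT ^ l * G ^ m) z ∈ D → bwT ^ l * G ^ m ∈ bwStab D :=
    fun l m z hz hz2 => bwStab_comp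
      (mul_mem (Subgroup.zpow_mem _ hTW l) (Subgroup.pow_mem _ hGW m)) hz hz2
  have F2p : ∀ k : ℕ, bwT ^ k ∈ bwStab D → k = 0 := by
    intro k hk
    by_contra hk0
    have h1 := (hk x).2 hxD
    rw [bwT_nat] at h1
    exact circ_claim hC hxW (Nat.one_le_iff_ne_zero.2 hk0) h1
  have F2 : ∀ k : ℤ, bwT ^ k ∈ bwStab D → k = 0 := by
    intro k hk
    obtain ⟨n, rfl | rfl⟩ := k.eq_nat_or_neg
    · rw [zpow_natCast] at hk
      rw [F2p n hk]; rfl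
    · rw [zpow_neg, zpow_natCast, inv_mem_iff] at hk
      rw [F2p n hk]; rfl
  have hex : ∃ n : ℕ, 1 ≤ n ∧ ∃ k : ℤ, bwT ^ k * G ^ n ∈ bwStab D := by
    obtain ⟨m, hm, l, z, hz, hz2⟩ := lift_rec hG hnw hDo ⟨x, hxD⟩
    exact ⟨m, hm, l, F1 l m z hz hz2⟩
  classical
  obtain ⟨hn, k, hk⟩ := Nat.find_spec hex
  have hmin := fun m => @Nat.find_min _ _ hex m
  set n := Nat.find hex with hndef
  set H := bwT ^ k * G ^ n with hH
  have hHpow : ∀ q : ℕ, H ^ q = bwT ^ (k * q) * G ^ (n * q) := by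
    intro q
    rw [hH, ((hcomm.zpow_left k).pow_right n).mul_pow, ← pow_mul, zpow_mul, zpow_natCast]
  have hrec : ∀ V ⊆ D, IsOpen V → V.Nonempty → ∃ j : ℕ, 1 ≤ j ∧ ∃ z ∈ V, (H ^ j) z ∈ V := by
    intro V hVD hV hVne
    obtain ⟨m, hm, l, z, hz, hz2⟩ := lift_rec hG hnw hV hVne
    have hK := F1 l m z (hVD hz) (hVD hz2)
    have hdm := Nat.div_add_mod m n
    set q := m / n
    set r := m % n with hr
    have hfac : H ^ q * (bwT ^ (l - k * q) * G ^ r) = bwT ^ l * G ^ m := by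
      rw [hHpow, ((hcomm.symm.pow_left (n * q)).zpow_right (l - k * q)).mul_mul_mul_comm,
        ← zpow_add, ← pow_add, hdm]
      congr 2
      ring
    have hrK : bwT ^ (l - k * q) * G ^ r ∈ bwStab D := by
      rw [← hfac] at hK
      exact (Subgroup.mul_mem_cancel_left _ (Subgroup.pow_mem _ hk q)).1 hK
    have hr0 : r = 0 := by
      by_contra hr0
      exact hmin r (Nat.mod_lt _ hn) ⟨Nat.one_le_iff_ne_zero.2 hr0, _, hrK⟩
    rw [hr0, pow_zero, mul_one] at hrK
    have hl := F2 _ hrK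
    rw [hl, hr0, pow_zero, zpow_zero, mul_one, mul_one] at hfac
    refine ⟨q, ?_, z, hz, ?_⟩
    · rcases Nat.eq_zero_or_pos q with h0 | h0
      · rw [h0, hr0] at hdm
        omega
      · exact h0
    · rw [hfac]; exact hz2
  refine final_free hDo hxD H ?_ (final_parity H hrec)
  intro z hz
  apply hnp
  refine ⟨projA z, n * 2, by omega, ?_⟩
  rw [← pow_two, hHpow] at hz
  rw [← lift_pow hG]
  conv_rhs => rw [← hz]
  change _ = projA ((bwT ^ _) ((G ^ (n * 2)) z))
  rw [bwT_zpow, projA_add]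

/-- **Corollary 3.6.**  An invariant circloid of a non-wandering annular homeomorphism
homotopic to the identity and without periodic points has empty interior. -/
theorem statement14 (f : Ann ≃ₜ Ann) (G : (ℝ × ℝ) ≃ₜ (ℝ × ℝ)) (hG : IsLiftA f G)
    (hnw : NonWandering (⇑f)) (hnp : ¬ HasPeriodicPoint (⇑f))
    (C : Set Ann) (hC : IsCircloidA C) (hCinv : f '' C = C) :
    interior C = ∅ := by
  exact final_main f G hG hnw hnp C hC hCinv
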